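/- Proposition 4 (DD-SEP is contained in D-SEP): Let 𝕄 be a partial mixed graph with distinct vertices X and Y, and let M be a completion of 𝕄 such that D-SEP(X,Y,M_X̃) ∩ De(X,M) = ∅ (the graphical condition for the existence of an adjustment set relative to (X,Y) in M). Then every vertex V ∈ DD-SEP(X,Y,𝕄_X̃) satisfies V ∈ D-SEP(X,Y,M_X̃). -/

import Mathlib

/-- Marks at edge ends in a partial mixed graph. -/
inductive Mark : Type
  | tail
  | arrow
  | circle
deriving DecidableEq

/-- A partial mixed graph (PMG): a symmetric irreflexive adjacency relation together
with, for each ordered pair `(a, b)` of adjacent vertices, a mark `mark a b` at `b` on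
the edge `a–b`, such that no edge has tails at both endpoints. -/
structure PMG (V : Type) where
  adj : V → V → Prop
  symm : ∀ a b, adj a b → adj b a
  irrefl : ∀ a, ¬ adj a a
  mark : V → V → Mark
  noDoubleTail : ∀ a b, adj a b → ¬ (mark a b = Mark.tail ∧ mark b a = Mark.tail)

namespace PMG

variable {V : Type}

/-- `a → b`: adjacent, tail at `a`, arrowhead at `b`. -/
def dir (G : PMG V) (a b : V) : Prop :=
  G.adj a b ∧ G.mark b a = Mark.tail ∧ G.mark a b = Mark.arrow

/-- `a ↔ b`: adjacent, arrowheads at both endpoints. -/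
def bidir (G : PMG V) (a b : V) : Prop :=
  G.adj a b ∧ G.mark b a = Mark.arrow ∧ G.mark a b = Mark.arrow

/-- `a` is an ancestor of `b`: `a = b` or there is a directed path from `a` to `b`. -/
def Anc (G : PMG V) (a b : V) : Prop :=
  Relation.ReflTransGen G.dir a b

/-- `a` is an ancestor of some vertex of the set `S`. -/
def AncSet (G : PMG V) (a : V) (S : Set V) : Prop :=
  ∃ v ∈ S, G.Anc a v

/-- A mixed graph: a PMG with no circle marks. -/
def IsMixed (G : PMG V) : Prop :=
  ∀ a b, G.adj a b → G.mark a b ≠ Mark.circle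

/-- Ancestral: no directed cycles and no almost directed cycles. -/
def Ancestral (G : PMG V) : Prop :=
  ∀ a b, G.Anc a b → a ≠ b → ¬ G.dir b a ∧ ¬ G.bidir a b

/-- Unshielded collider `(a, b, c)`: `a, c` both adjacent to `b`, `a` and `c`
distinct and nonadjacent, arrowheads at `b` on both edges. -/
def UnshieldedCollider (G : PMG V) (a b c : V) : Prop :=
  a ≠ c ∧ G.adj a b ∧ G.adj c b ∧ ¬ G.adj a c ∧
    G.mark a b = Mark.arrow ∧ G.mark c b = Mark.arrow

/-- `M` is a completion of the PMG `H`: same vertices and adjacencies, all non-circle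
marks of `H` occur identically in `M`, `M` is an ancestral mixed graph, and every
unshielded collider of `M` is already an unshielded collider of `H`. -/
def Completion (H M : PMG V) : Prop :=
  (∀ a b, M.adj a b ↔ H.adj a b) ∧
  (∀ a b, H.adj a b → H.mark a b ≠ Mark.circle → M.mark a b = H.mark a b) ∧
  M.IsMixed ∧ M.Ancestral ∧
  (∀ a b c, M.UnshieldedCollider a b c → H.UnshieldedCollider a b c)

/-- An edge usable in a possible directed path from `a` to `b`:
adjacent, no arrowhead at `a`, no tail at `b`. -/
def possEdge (G : PMG V) (a b : V) : Prop :=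
  G.adj a b ∧ G.mark b a ≠ Mark.arrow ∧ G.mark a b ≠ Mark.tail

/-- A circle edge: adjacent with circle marks at both endpoints. -/
def circleEdge (G : PMG V) (a b : V) : Prop :=
  G.adj a b ∧ G.mark a b = Mark.circle ∧ G.mark b a = Mark.circle

/-- `p 0, …, p n` is a path: distinct vertices, consecutive ones adjacent. -/
def IsPathOn (G : PMG V) (p : ℕ → V) (n : ℕ) : Prop :=
  (∀ i ≤ n, ∀ j ≤ n, p i = p j → i = j) ∧ ∀ i < n, G.adj (p i) (p (i+1))

/-- `p 0, …, p n` is a possible directed path. -/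
def IsPossDirPathOn (G : PMG V) (p : ℕ → V) (n : ℕ) : Prop :=
  (∀ i ≤ n, ∀ j ≤ n, p i = p j → i = j) ∧ ∀ i < n, G.possEdge (p i) (p (i+1))

/-- `p 0, …, p n` is a circle path. -/
def IsCirclePathOn (G : PMG V) (p : ℕ → V) (n : ℕ) : Prop :=
  (∀ i ≤ n, ∀ j ≤ n, p i = p j → i = j) ∧ ∀ i < n, G.circleEdge (p i) (p (i+1))

/-- The path `p 0, …, p n` is uncovered: any two nonconsecutive neighbours of an
internal vertex are nonadjacent. -/
def UncoveredOn (G : PMG V) (p : ℕ → V) (n : ℕ) : Prop :=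
  ∀ i, i + 2 ≤ n → ¬ G.adj (p i) (p (i+2))

/-- `F_x` relative to `V'`: the vertices of `V'` adjacent to `x` whose edge carries
a circle or an arrowhead at `x`. -/
def Fset (G : PMG V) (V' : Set V) (x : V) : Set V :=
  {v | v ∈ V' ∧ G.adj v x ∧ (G.mark v x = Mark.circle ∨ G.mark v x = Mark.arrow)}

/-- `p 0, …, p n` is an unbridged path relative to `V'` in `G`: an uncovered circle
path with at least one edge, lying in `G[−V']`, with
`F_{p 0} \ F_{p 1} ≠ ∅` and `F_{p n} \ F_{p (n-1)} ≠ ∅`. -/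
def UnbridgedOn (G : PMG V) (V' : Set V) (p : ℕ → V) (n : ℕ) : Prop :=
  1 ≤ n ∧ G.IsCirclePathOn p n ∧ G.UncoveredOn p n ∧
  (∀ i ≤ n, p i ∉ V') ∧
  (G.Fset V' (p 0) \ G.Fset V' (p 1)).Nonempty ∧
  (G.Fset V' (p n) \ G.Fset V' (p (n-1))).Nonempty

/-- The set `S_A`: `A` together with all vertices adjacent to `A` whose edge has an
arrowhead at `A`. -/
def SA (G : PMG V) (A : V) : Set V :=
  {A} ∪ {v | G.adj v A ∧ G.mark v A = Mark.arrow}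

end PMG

namespace PMG

/-- `G_X̃`: the graph `G` with all edges out of `X` (edges `X → v`) removed. -/
def delOut {V : Type} (G : PMG V) (X : V) : PMG V where
  adj a b := G.adj a b ∧ ¬ (a = X ∧ G.dir X b) ∧ ¬ (b = X ∧ G.dir X a)
  symm := fun a b h => ⟨G.symm a b h.1, h.2.2, h.2.1⟩
  irrefl := fun a h => G.irrefl a h.1
  mark := G.mark
  noDoubleTail := fun a b h => G.noDoubleTail a b h.1

/-- `D-SEP(X, Y, G)`: vertices `v ≠ X` joined to `X` by a collider path all of
whose vertices are ancestors of `X` or of `Y` in `G`. -/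
def DSEP {V : Type} (G : PMG V) (X Y : V) : Set V :=
  {v | v ≠ X ∧ ∃ (p : ℕ → V) (n : ℕ), 1 ≤ n ∧ G.IsPathOn p n ∧
    p 0 = X ∧ p n = v ∧
    (∀ i, 1 ≤ i → i < n →
      G.mark (p (i-1)) (p i) = Mark.arrow ∧ G.mark (p (i+1)) (p i) = Mark.arrow) ∧
    (∀ i ≤ n, G.Anc (p i) X ∨ G.Anc (p i) Y)}

/-- `Q_v`: the vertices `v'` that are ancestors of `Y` in `G`, adjacent to `v`,
with a circle at `v` on the edge `v–v'`. -/
def QV {V : Type} (G : PMG V) (Y v : V) : Set V :=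
  {v' | G.Anc v' Y ∧ G.adj v v' ∧ G.mark v' v = Mark.circle}

/-- `DD-SEP(X, Y, 𝕄_X̃)`, defined inductively: `v` belongs to it iff there is a
path `X ↔ p 1 ↔ ⋯ ↔ p (k-1) ◂ v` in `𝕄_X̃` whose internal edges are bidirected
and whose last edge has an arrowhead at `p (k-1)`, where `Y` is a possible
descendant of `X` in `𝕄`, all internal vertices already belong to `DD-SEP`, and
`v` is an ancestor of `Y` in `𝕄` or `𝕄[Q_v]` is not complete. -/
inductive DDSEP {V : Type} (G : PMG V) (X Y : V) : V → Prop
  | intro (v : V) (p : ℕ → V) (k : ℕ) (hk : 1 ≤ k)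
      (hinj : ∀ i ≤ k, ∀ j ≤ k, p i = p j → i = j)
      (h0 : p 0 = X) (hkv : p k = v)
      (hbi : ∀ i, i + 1 < k → (G.delOut X).bidir (p i) (p (i+1)))
      (hlastadj : (G.delOut X).adj (p (k-1)) (p k))
      (hlast : (G.delOut X).mark (p k) (p (k-1)) = Mark.arrow)
      (hmid : ∀ i, 1 ≤ i → i < k → DDSEP G X Y (p i))
      (hY : Relation.ReflTransGen G.possEdge X Y)
      (hv : G.Anc v Y ∨ ∃ a ∈ G.QV Y v, ∃ b ∈ G.QV Y v, a ≠ b ∧ ¬ G.adj a b) :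
      DDSEP G X Y v

end PMG

/-!
Condition (3) makes every vertex of DD-SEP an ancestor of `Y` in the completion: if two members of
`Q_V` are nonadjacent, `V` cannot be a collider between them, since that would be a new unshielded
collider, so the completion orients an edge from `V` towards an ancestor of `Y`. The path witnessing
membership is a collider path with an arrowhead at `X`. It therefore has no edge out of `X`, and
survives both the completion and the passage to `M_X̃`. A directed path to `Y` that is cut by that
passage leads to `X` instead, which D-SEP also allows.
-/

namespace PMG

variable {V : Type} {G H M : PMG V} {X Y a b v : V} {p : ℕ → V} {n : ℕ}

section DeletingOutgoingEdges

lemma adj_delOut_of_mark_eq_arrow (hab : G.adj a b) (ha : G.mark b a = Mark.arrow) (hb : b ≠ X) :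
    (G.delOut X).adj a b := by
  refine ⟨hab, ?_, fun h => hb h.1⟩
  rintro ⟨rfl, -, htail, -⟩
  simp [ha] at htail

lemma dir.delOut (hab : G.dir a b) (ha : a ≠ X) : (G.delOut X).dir a b :=
  ⟨(G.delOut X).symm _ _ (adj_delOut_of_mark_eq_arrow (G.symm _ _ hab.1) hab.2.2 ha), hab.2⟩

lemma Anc.delOut_or (h : G.Anc v Y) : (G.delOut X).Anc v X ∨ (G.delOut X).Anc v Y := by
  induction h using Relation.ReflTransGen.head_induction_on with
  | refl => exact Or.inr .refl
  | @head a c hac _ ih =>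
    by_cases ha : a = X
    · exact Or.inl (ha ▸ .refl)
    · exact ih.imp (.head (hac.delOut ha)) (.head (hac.delOut ha))

end DeletingOutgoingEdges

section MixedGraphs

lemma IsMixed.dir_of_mark_eq_tail (hM : M.IsMixed) (hab : M.adj a b)
    (ha : M.mark b a = Mark.tail) : M.dir a b := by
  refine ⟨hab, ha, ?_⟩
  cases hb : M.mark a b with
  | tail => exact absurd ⟨hb, ha⟩ (M.noDoubleTail a b hab)
  | arrow => rfl
  | circle => exact absurd hb (hM a b hab)

lemma IsMixed.dir_or_mark_eq_arrow (hM : M.IsMixed) (hab : M.adj a b) :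
    M.dir a b ∨ M.mark b a = Mark.arrow := by
  cases ha : M.mark b a with
  | tail => exact Or.inl (hM.dir_of_mark_eq_tail hab ha)
  | arrow => exact Or.inr rfl
  | circle => exact absurd ha (hM b a (M.symm a b hab))

lemma IsMixed.dir_or_dir_of_not_unshieldedCollider (hM : M.IsMixed) (hva : M.adj v a)
    (hvb : M.adj v b) (hne : a ≠ b) (hab : ¬ M.adj a b) (h : ¬ M.UnshieldedCollider a v b) :
    M.dir v a ∨ M.dir v b := by
  rcases hM.dir_or_mark_eq_arrow hva with hdir | ha
  · exact Or.inl hdir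
  rcases hM.dir_or_mark_eq_arrow hvb with hdir | hb
  · exact Or.inr hdir
  exact absurd ⟨hne, M.symm _ _ hva, M.symm _ _ hvb, hab, ha, hb⟩ h

end MixedGraphs

/-- `M` refines `H`: it has the same adjacencies and keeps every non-circle mark of `H`. This is
the part of `Completion` that imposes no condition on how the circles of `H` are oriented; they may
even remain circles. -/
structure Refines (M H : PMG V) : Prop where
  adj_iff : ∀ a b, M.adj a b ↔ H.adj a b
  mark_eq : ∀ a b, H.adj a b → H.mark a b ≠ Mark.circle → M.mark a b = H.mark a b

/-- The sequence `p 0, …, p n` is a collider path with an arrowhead at its first vertex,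
`p 0 ↔ p 1 ↔ ⋯ ↔ p (n-1) ◂ p n`, the shape of the paths in the definition of DD-SEP. The fields
record the near and the far arrowhead of each edge separately, because the mark of the last edge at
`p n` is arbitrary. -/
structure IsColliderPathInto (G : PMG V) (p : ℕ → V) (n : ℕ) : Prop where
  isPathOn : G.IsPathOn p n
  mark_near : ∀ i < n, G.mark (p (i + 1)) (p i) = Mark.arrow
  mark_far : ∀ i, i + 1 < n → G.mark (p i) (p (i + 1)) = Mark.arrow

namespace Refines

lemma mark_eq_arrow (hMH : M.Refines H) (hab : H.adj a b) (h : H.mark a b = Mark.arrow) :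
    M.mark a b = Mark.arrow := by
  rw [hMH.mark_eq a b hab (by simp [h]), h]

lemma dir (hMH : M.Refines H) (hab : H.dir a b) : M.dir a b := by
  obtain ⟨hadj, htail, harrow⟩ := hab
  refine ⟨(hMH.adj_iff a b).2 hadj, ?_, hMH.mark_eq_arrow hadj harrow⟩
  rw [hMH.mark_eq b a (H.symm _ _ hadj) (by simp [htail]), htail]

lemma anc (hMH : M.Refines H) (hab : H.Anc a b) : M.Anc a b :=
  Relation.ReflTransGen.mono (fun _ _ => hMH.dir) _ _ hab

lemma isColliderPathInto (hMH : M.Refines H) (hp : H.IsColliderPathInto p n) :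
    M.IsColliderPathInto p n where
  isPathOn := ⟨hp.isPathOn.1, fun i hi => (hMH.adj_iff _ _).2 (hp.isPathOn.2 i hi)⟩
  mark_near i hi := hMH.mark_eq_arrow (H.symm _ _ (hp.isPathOn.2 i hi)) (hp.mark_near i hi)
  mark_far i hi := hMH.mark_eq_arrow (hp.isPathOn.2 i (by lia)) (hp.mark_far i hi)

end Refines

lemma Completion.refines (hHM : Completion H M) : M.Refines H := ⟨hHM.1, hHM.2.1⟩

namespace IsColliderPathInto

lemma ne_zero (hp : G.IsColliderPathInto p n) {i : ℕ} (hi : 1 ≤ i) (hin : i ≤ n) : p i ≠ p 0 :=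
  fun h => by have := hp.isPathOn.1 i hin 0 n.zero_le h; lia

lemma of_delOut (hp : (G.delOut X).IsColliderPathInto p n) : G.IsColliderPathInto p n where
  isPathOn := ⟨hp.isPathOn.1, fun i hi => (hp.isPathOn.2 i hi).1⟩
  mark_near := hp.mark_near
  mark_far := hp.mark_far

lemma delOut (hp : G.IsColliderPathInto p n) : (G.delOut (p 0)).IsColliderPathInto p n where
  isPathOn := ⟨hp.isPathOn.1, fun i hi => adj_delOut_of_mark_eq_arrow (hp.isPathOn.2 i hi)
    (hp.mark_near i hi) (hp.ne_zero (by lia) hi)⟩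
  mark_near := hp.mark_near
  mark_far := hp.mark_far

lemma mem_DSEP (hp : G.IsColliderPathInto p n) (hn : 1 ≤ n)
    (hanc : ∀ i, 1 ≤ i → i ≤ n → G.Anc (p i) (p 0) ∨ G.Anc (p i) Y) :
    p n ∈ G.DSEP (p 0) Y := by
  refine ⟨hp.ne_zero hn le_rfl, p, n, hn, hp.isPathOn, rfl, rfl, ?_, ?_⟩
  · rintro (_ | i) hi hin
    · lia
    · exact ⟨hp.mark_far i hin, hp.mark_near (i + 1) hin⟩
  · rintro (_ | i) hin
    · exact Or.inl .refl
    · exact hanc (i + 1) (by lia) hin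

end IsColliderPathInto

lemma anc_of_mem_QV_of_not_adj (hMH : M.Refines H) (hM : M.IsMixed)
    (hcol : ∀ a b c, M.UnshieldedCollider a b c → H.UnshieldedCollider a b c)
    (ha : a ∈ H.QV Y v) (hb : b ∈ H.QV Y v) (hne : a ≠ b) (hab : ¬ H.adj a b) : M.Anc v Y := by
  obtain ⟨haY, hva, hcircle⟩ := ha
  obtain ⟨hbY, hvb, -⟩ := hb
  have hnot : ¬ M.UnshieldedCollider a v b := fun h => by
    simpa [hcircle] using (hcol a v b h).2.2.2.2.1
  rcases hM.dir_or_dir_of_not_unshieldedCollider ((hMH.adj_iff v a).2 hva)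
    ((hMH.adj_iff v b).2 hvb) hne (mt (hMH.adj_iff a b).1 hab) hnot with hdir | hdir
  · exact .head hdir (hMH.anc haY)
  · exact .head hdir (hMH.anc hbY)

namespace DDSEP

lemma anc (hv : H.DDSEP X Y v) (hMH : M.Refines H) (hM : M.IsMixed)
    (hcol : ∀ a b c, M.UnshieldedCollider a b c → H.UnshieldedCollider a b c) : M.Anc v Y := by
  obtain ⟨_, _, _, _, _, _, _, _, _, _, _, _, hvY | ⟨a, ha, b, hb, hne, hab⟩⟩ := hv
  · exact hMH.anc hvY
  · exact anc_of_mem_QV_of_not_adj hMH hM hcol ha hb hne hab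

lemma exists_isColliderPathInto (hv : H.DDSEP X Y v) :
    ∃ p n, 1 ≤ n ∧ (H.delOut X).IsColliderPathInto p n ∧ p 0 = X ∧ p n = v ∧
      ∀ i, 1 ≤ i → i ≤ n → H.DDSEP X Y (p i) := by
  have hv' := hv
  obtain ⟨_, p, k, hk, hinj, h0, hkv, hbi, hlastadj, hlast, hmid, -, -⟩ := hv'
  obtain ⟨n, rfl⟩ : ∃ n, k = n + 1 := ⟨k - 1, by lia⟩
  refine ⟨p, n + 1, hk, ⟨⟨hinj, fun i hi => ?_⟩, fun i hi => ?_, fun i hi => (hbi i hi).2.2⟩,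
    h0, hkv, fun i hi hin => ?_⟩
  · rcases Nat.lt_succ_iff_lt_or_eq.1 hi with hlt | rfl
    · exact (hbi i (by lia)).1
    · exact hlastadj
  · rcases Nat.lt_succ_iff_lt_or_eq.1 hi with hlt | rfl
    · exact (hbi i (by lia)).2.1
    · exact hlast
  · rcases hin.lt_or_eq with hlt | rfl
    · exact hmid i hi hlt
    · exact hkv ▸ hv

end DDSEP

end PMG

theorem DDSEP_subset_DSEP_general {V : Type} {H M : PMG V} (hMH : M.Refines H) (hM : M.IsMixed)
    (hcol : ∀ a b c, M.UnshieldedCollider a b c → H.UnshieldedCollider a b c)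
    {X Y v : V} (hv : H.DDSEP X Y v) : v ∈ (M.delOut X).DSEP X Y := by
  obtain ⟨p, n, hn, hp, rfl, rfl, hmem⟩ := hv.exists_isColliderPathInto
  have hpM : (M.delOut (p 0)).IsColliderPathInto p n :=
    (hMH.isColliderPathInto hp.of_delOut).delOut
  exact hpM.mem_DSEP hn fun i hi hin => ((hmem i hi hin).anc hMH hM hcol).delOut_or

/-- **Proposition 4 (DD-SEP ⊆ D-SEP).** Let `M` be a completion of the PMG `𝕄`
with `D-SEP(X, Y, M_X̃) ∩ De(X, M) = ∅`. Then every vertex of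
`DD-SEP(X, Y, 𝕄_X̃)` belongs to `D-SEP(X, Y, M_X̃)`. -/
theorem DDSEP_subset_DSEP {V : Type} (H M : PMG V) (hHM : PMG.Completion H M)
    (X Y : V) (hXY : X ≠ Y)
    (hdisj : ∀ v ∈ PMG.DSEP (M.delOut X) X Y, ¬ M.Anc X v) :
    ∀ v, PMG.DDSEP H X Y v → v ∈ PMG.DSEP (M.delOut X) X Y := by
  have hMH := hHM.refines
  obtain ⟨-, -, hM, -, hcol⟩ := hHM
  exact fun _ hv => DDSEP_subset_DSEP_general hMH hM hcol hv
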